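/- arXiv:2504.01479 — 2 statements merged into one kernel-verified Lean document; each statement's English description precedes it below -/
import Mathlib

section
/- For every 1 ≤ i ≤ N and every λ ∈ ℂ, with λ_p = (−1)^{p−1} λ, the determinant of the trailing submatrix M_{i:N,s} equals ε_{N,i} · Σ_{k=0}^{N+1−i} (λ^{N+1−i−k} / (−2)^k) · ( Σ_{i ≤ i_1 < ⋯ < i_k ≤ N} (−1)^{i_1+⋯+i_k} · exp(2 n Σ_{l=1}^{k} (−1)^l ξ_{i_l}) ), where ε_{N,i} = (−1)^{⌊(N+1−i)/2⌋} if N is odd and ε_{N,i} = (−1)^{i−1} (−1)^{⌊(N+1−i)/2⌋} if N is even; here for k = 0 the inner sum is 1. -/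
/-!
Put `x_p = e^{nξ_p}`, and let `D_i(x)` be the determinant of the trailing submatrix, whose entries
are `x_p⁻¹ (x_q⁻¹ - x_q) / 2` above the diagonal, `(x_p + x_p⁻¹) x_q⁻¹ / 2` below it, and
`λ_p + x_p⁻² / 2` on it. With `v_q = x_q⁻¹ - x_q` and `w_p = (x_p + x_p⁻¹) / 2`, and apart from the
summand `λ_i` of the corner, the first row is `x_i⁻¹ / 2` times `(x_i⁻¹, v)` and the first column is
`x_i⁻¹` times `(x_i⁻¹ / 2, w)`. Hence `D_i(x)` is `λ_i D_{i+1}(x)` plus `x_i⁻² / 2` times the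
determinant of the remaining block minus `w vᵀ`. This rank one correction merely replaces `x` by
`x⁻¹`, so

  `D_i(x) = λ_i D_{i+1}(x) + x_i⁻² / 2 * D_{i+1}(x⁻¹)`.

Unrolling the recurrence gives one term for each subset `s` of `{i, …, N}`, the indices at which the
second summand is taken. Each such choice inverts all later `x_p`, which is where the signs
`(-1)^l` in the exponent come from. When `λ_p = (-1)^{p-1} λ`, the signs of the indices outside `s`
multiply to those of all indices, which give `ε_{N,i}`, times those of the indices in `s`.
-/

open Finset

/-- The signed exponential sum
`Σ_{lo ≤ i_1 < ⋯ < i_k ≤ hi} (−1)^{i_1+⋯+i_k} exp(2 n Σ_{l=1}^{k} (−1)^l ξ_{i_l})`,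
where the `l`-th smallest element of a subset `s` carries the sign `(−1)^l`
(the position of `i ∈ s` is `(s.filter (· ≤ i)).card`). For `k = 0` the sum is `1`. -/
noncomputable def sgnExpSum (n : ℕ) (ξ : ℕ → ℝ) (lo hi k : ℕ) : ℝ :=
  ∑ s ∈ (Finset.Icc lo hi).powersetCard k,
    (-1 : ℝ) ^ (∑ i ∈ s, i) *
      Real.exp (2 * n * ∑ i ∈ s, (-1 : ℝ) ^ ((s.filter (· ≤ i)).card) * ξ i)

/-- The trailing submatrix `M_{i:N,s}` with rows and columns indexed by
`p, q ∈ {i, …, N}` (realized as `p = i + a` for `a : Fin (N+1−i)`):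
the `(p,p)` entry is `(−1)^{p−1} λ + (1/2) e^{−2nξ_p}`, the `(p,q)` entry for
`p < q` is `−sinh(nξ_q) e^{−nξ_p}`, and for `p > q` it is `cosh(nξ_p) e^{−nξ_q}`. -/
noncomputable def MsSub (n N : ℕ) (ξ : ℕ → ℝ) (l : ℂ) (i : ℕ) :
    Matrix (Fin (N + 1 - i)) (Fin (N + 1 - i)) ℂ :=
  fun a b =>
    if a = b then
      (-1 : ℂ) ^ (i + (a : ℕ) - 1) * l +
        ((Real.exp (-(2 * n * ξ (i + (a : ℕ)))) / 2 : ℝ) : ℂ)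
    else if a < b then
      -(((Real.sinh (n * ξ (i + (b : ℕ))) * Real.exp (-(n * ξ (i + (a : ℕ))))) : ℝ) : ℂ)
    else
      (((Real.cosh (n * ξ (i + (a : ℕ))) * Real.exp (-(n * ξ (i + (b : ℕ))))) : ℝ) : ℂ)

section RankOneBorder

open Matrix

variable {R : Type*} [CommRing R]

lemma det_fromBlocks_rankOne_border {m : Type*} [Fintype m] [DecidableEq m]
    (S : Matrix m m R) (v w : m → R) (a b c : R) :
    (fromBlocks S (b • replicateCol Unit w) (a • replicateRow Unit v)
      (of fun _ _ => c + a * b)).det =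
      c * S.det + a * b * (S - vecMulVec w v).det := by
  set M := fromBlocks S (b • replicateCol Unit w) (a • replicateRow Unit v)
    (of fun _ _ => c + a * b)
  have last_row : M = M.updateRow (.inr ())
      ((Sum.elim 0 fun _ => c : m ⊕ Unit → R) + a • Sum.elim v fun _ => b) := by
    ext (p | p) (q | q) <;> simp [M]
  have corner : (M.updateRow (.inr ()) (Sum.elim 0 fun _ => c)).det = c * S.det := by
    have : M.updateRow (.inr ()) (Sum.elim 0 fun _ => c) =
        fromBlocks S (b • replicateCol Unit w) 0 (of fun _ _ => c) := by
      ext (p | p) (q | q) <;> simp [M]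
    rw [this, det_fromBlocks_zero₂₁, det_unique (n := Unit), mul_comm, of_apply]
  have border : (M.updateRow (.inr ()) (Sum.elim v fun _ => b)).det =
      b * (S - vecMulVec w v).det := by
    have : M.updateRow (.inr ()) (Sum.elim v fun _ => b) =
        fromBlocks S (replicateCol Unit w) (replicateRow Unit v) 1 *
          diagonal (Sum.elim 1 fun _ => b) := by
      ext (p | p) (q | q) <;> simp [M, mul_comm]
    rw [this, det_mul, det_fromBlocks_one₂₂, det_diagonal, mul_comm, ← vecMulVec_eq]
    simp
  rw [last_row, det_updateRow_add, det_updateRow_smul, corner, border, mul_assoc]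

variable {ι : Type*} [DecidableEq ι]

/-- The principal minor of `A` on the rows and columns in `s`, for an index type that may be
infinite. -/
def principalMinor (A : Matrix ι ι R) (s : Finset ι) : R :=
  (A.submatrix ((↑) : s → ι) (↑)).det

lemma principalMinor_empty (A : Matrix ι ι R) : principalMinor A ∅ = 1 :=
  det_isEmpty

lemma principalMinor_map_univ {κ : Type*} [Fintype κ] [DecidableEq κ] (A : Matrix ι ι R)
    (f : κ ↪ ι) : principalMinor A (univ.map f) = (A.submatrix f f).det := by
  let e : κ ≃ univ.map f := Equiv.ofBijective (fun k => ⟨f k, mem_map_of_mem f (mem_univ k)⟩)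
    ⟨fun _ _ h => f.injective (congrArg Subtype.val h), fun ⟨p, hp⟩ => by simpa using hp⟩
  exact (det_submatrix_equiv_self e _).symm

lemma principalMinor_insert_of_rankOne_border {A : Matrix ι ι R} {s : Finset ι} {i : ι}
    (hi : i ∉ s) {v w : ι → R} {a b c : R} (hdiag : A i i = c + a * b)
    (hrow : ∀ q ∈ s, A i q = a * v q) (hcol : ∀ p ∈ s, A p i = w p * b) :
    principalMinor A (insert i s) =
      c * principalMinor A s + a * b * principalMinor (A - vecMulVec w v) s := by
  let e := (subtypeInsertEquivOption hi).trans (Equiv.optionEquivSumPUnit s)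
  have hblocks : (A.submatrix ((↑) : ↥(insert i s) → ι) (↑)).submatrix e.symm e.symm =
      fromBlocks (A.submatrix ((↑) : s → ι) (↑))
        (b • replicateCol Unit fun p : s => w p)
        (a • replicateRow Unit fun q : s => v q) (of fun _ _ => c + a * b) := by
    ext (p | p) (q | q)
    · rfl
    · exact (hcol p p.2).trans (mul_comm _ _)
    · exact hrow q q.2
    · exact hdiag
  rw [principalMinor, ← det_submatrix_equiv_self e.symm, hblocks, det_fromBlocks_rankOne_border]
  rfl

end RankOneBorder

section AlternatingProd

variable {ι : Type*} [LinearOrder ι]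

/-- The product `x_{i_1}⁻¹ x_{i_2} x_{i_3}⁻¹ ⋯` over the elements `i_1 < i_2 < ⋯` of `s`. The
position of `i` in `s` is encoded as the number of elements of `s` that are at most `i`. -/
def alternatingProd {G : Type*} [DivisionCommMonoid G] (x : ι → G) (s : Finset ι) : G :=
  ∏ i ∈ s, x i ^ ((-1 : ℤ) ^ #{j ∈ s | j ≤ i})

lemma alternatingProd_insert_of_forall_lt {G : Type*} [DivisionCommMonoid G] (x : ι → G)
    {s : Finset ι} {i : ι} (hi : ∀ j ∈ s, i < j) :
    alternatingProd x (insert i s) = (x i)⁻¹ * alternatingProd x⁻¹ s := by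
  have his : i ∉ s := fun h => (hi i h).false
  have filter_min : {j ∈ insert i s | j ≤ i} = {i} := by grind
  have card_filter (k) (hk : k ∈ s) : #{j ∈ insert i s | j ≤ k} = #{j ∈ s | j ≤ k} + 1 := by
    rw [filter_insert, if_pos (hi k hk).le, card_insert_of_notMem (by simp [his])]
  rw [alternatingProd, prod_insert his, filter_min, card_singleton, pow_one, zpow_neg_one]
  refine congrArg _ (prod_congr rfl fun k hk => ?_)
  rw [card_filter k hk, pow_succ, mul_neg_one, zpow_neg, Pi.inv_apply, inv_zpow]

lemma alternatingProd_exp (f : ι → ℂ) (s : Finset ι) :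
    alternatingProd (fun i => Complex.exp (f i)) s =
      Complex.exp (∑ i ∈ s, (-1) ^ #{j ∈ s | j ≤ i} * f i) := by
  rw [alternatingProd, Complex.exp_sum]
  refine prod_congr rfl fun i _ => ?_
  rw [← Complex.exp_int_mul]
  push_cast
  rfl

end AlternatingProd

section HyperbolicMatrix

open Matrix

variable {ι K : Type*} [LinearOrder ι] [Field K]

/-- The matrix with diagonal `λ_p + x_p⁻² / 2`, entries `x_p⁻¹ (x_q⁻¹ - x_q) / 2` above the diagonal
and `(x_p + x_p⁻¹) / 2 * x_q⁻¹` below it. For `x_p = exp t_p` these are `-e^{-t_p} sinh t_q` and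
`cosh t_p * e^{-t_q}`. -/
def hyperbolicMatrix (lam x : ι → K) : Matrix ι ι K :=
  of fun p q =>
    if p = q then lam p + (x p)⁻¹ ^ 2 / 2
    else if p < q then (x p)⁻¹ * ((x q)⁻¹ - x q) / 2
    else (x p + (x p)⁻¹) / 2 * (x q)⁻¹

lemma hyperbolicMatrix_sub_vecMulVec (lam x : ι → K) :
    hyperbolicMatrix lam x -
      vecMulVec (fun p => (x p + (x p)⁻¹) / 2) (fun q => (x q)⁻¹ - x q) =
      hyperbolicMatrix lam x⁻¹ := by
  ext p q
  simp only [hyperbolicMatrix, Matrix.sub_apply, of_apply, vecMulVec_apply, Pi.inv_apply,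
    inv_inv]
  split_ifs with hpq
  · subst hpq
    ring
  · ring
  · ring

lemma principalMinor_hyperbolicMatrix_insert (lam x : ι → K) {s : Finset ι} {i : ι}
    (hi : ∀ j ∈ s, i < j) :
    principalMinor (hyperbolicMatrix lam x) (insert i s) =
      lam i * principalMinor (hyperbolicMatrix lam x) s +
        (x i)⁻¹ ^ 2 / 2 * principalMinor (hyperbolicMatrix lam x⁻¹) s := by
  have his : i ∉ s := fun h => (hi i h).false
  have hdiag : hyperbolicMatrix lam x i i = lam i + (x i)⁻¹ / 2 * (x i)⁻¹ := by
    simp [hyperbolicMatrix, sq, mul_div_right_comm]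
  have hrow : ∀ q ∈ s, hyperbolicMatrix lam x i q = (x i)⁻¹ / 2 * ((x q)⁻¹ - x q) := by
    intro q hq
    simp [hyperbolicMatrix, (hi q hq).ne, hi q hq, mul_div_right_comm]
  have hcol : ∀ p ∈ s, hyperbolicMatrix lam x p i = (x p + (x p)⁻¹) / 2 * (x i)⁻¹ := by
    intro p hp
    simp [hyperbolicMatrix, (hi p hp).ne', (hi p hp).not_gt]
  rw [principalMinor_insert_of_rankOne_border his hdiag hrow hcol,
    hyperbolicMatrix_sub_vecMulVec, sq, mul_div_right_comm]

theorem principalMinor_hyperbolicMatrix (lam x : ι → K) (s : Finset ι) :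
    principalMinor (hyperbolicMatrix lam x) s =
      ∑ t ∈ s.powerset, (∏ i ∈ s \ t, lam i) * (alternatingProd x t ^ 2 / 2 ^ #t) := by
  induction s using Finset.induction_on_min generalizing x with
  | empty => simp [principalMinor_empty, alternatingProd]
  | insert i s hi ih =>
    have his : i ∉ s := fun h => (hi i h).false
    rw [principalMinor_hyperbolicMatrix_insert lam x hi, ih, ih, sum_powerset_insert his,
      mul_sum, mul_sum]
    congr 1 <;> refine sum_congr rfl fun t ht => ?_
    · have hit : i ∉ t := fun h => his (mem_powerset.mp ht h)
      rw [insert_sdiff_of_notMem _ hit, prod_insert (by simp [his]), mul_assoc]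
    · have hlt : ∀ j ∈ t, i < j := fun j hj => hi j (mem_powerset.mp ht hj)
      have hit : i ∉ t := fun h => his (mem_powerset.mp ht h)
      rw [insert_sdiff_insert, sdiff_insert_of_notMem his, card_insert_of_notMem hit,
        alternatingProd_insert_of_forall_lt x hlt, mul_pow, pow_succ]
      ring

end HyperbolicMatrix

section Signs

variable {R : Type*} [CommRing R]

lemma prod_Icc_neg_one_pow_sub_one {i N : ℕ} (hi : 1 ≤ i) (hiN : i ≤ N) :
    ∏ p ∈ Icc i N, (-1 : R) ^ (p - 1) =
      if Odd N then (-1) ^ ((N + 1 - i) / 2) else (-1) ^ (i - 1) * (-1) ^ ((N + 1 - i) / 2) := by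
  have neg_one_pow_congr {a b : ℕ} (h : a % 2 = b % 2) : (-1 : R) ^ a = (-1) ^ b :=
    pow_eq_pow_of_modEq h neg_one_sq
  induction N, hiN using Nat.le_induction with
  | base =>
    split_ifs with hi_odd
    · simpa using neg_one_pow_congr (a := i - 1) (b := 0) (by grind)
    · simp
  | succ N hiN ih =>
    rw [prod_Icc_succ_top (by lia), ih]
    split_ifs <;> simp only [← pow_add] <;> exact neg_one_pow_congr (by grind)

lemma prod_neg_one_pow_sub_one {s : Finset ℕ} (hs : ∀ p ∈ s, 1 ≤ p) :
    ∏ p ∈ s, (-1 : R) ^ (p - 1) = (-1) ^ #s * (-1) ^ ∑ p ∈ s, p := by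
  rw [← prod_pow_eq_pow_sum, ← prod_const, ← prod_mul_distrib]
  refine prod_congr rfl fun p hp => ?_
  obtain ⟨q, rfl⟩ := Nat.exists_eq_add_of_le' (hs p hp)
  rw [Nat.add_sub_cancel, pow_succ']
  simp

lemma prod_sdiff_neg_one_pow_sub_one {s t : Finset ℕ} (hts : t ⊆ s) (ht : ∀ p ∈ t, 1 ≤ p) :
    ∏ p ∈ s \ t, (-1 : R) ^ (p - 1) =
      (∏ p ∈ s, (-1) ^ (p - 1)) * ((-1) ^ #t * (-1) ^ ∑ p ∈ t, p) := by
  rw [← prod_sdiff hts, prod_neg_one_pow_sub_one ht, mul_assoc, ← pow_add, ← mul_pow]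
  simp

end Signs

lemma principalMinor_hyperbolicMatrix_alternating {K : Type*} [Field K] (l : K) (x : ℕ → K)
    {s : Finset ℕ} (hs : ∀ p ∈ s, 1 ≤ p) :
    principalMinor (hyperbolicMatrix (fun p => (-1) ^ (p - 1) * l) x) s =
      (∏ p ∈ s, (-1) ^ (p - 1)) * ∑ t ∈ s.powerset,
        l ^ (#s - #t) / (-2) ^ #t * ((-1) ^ (∑ p ∈ t, p) * alternatingProd x t ^ 2) := by
  rw [principalMinor_hyperbolicMatrix, mul_sum]
  refine sum_congr rfl fun t ht => ?_
  have hts := mem_powerset.mp ht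
  have neg_two_pow : ((-2 : K) ^ #t)⁻¹ = (-1) ^ #t * (2 ^ #t)⁻¹ := by
    rw [neg_pow, mul_inv, ← inv_pow, inv_neg_one]
  rw [prod_mul_distrib, prod_const, card_sdiff_of_subset hts,
    prod_sdiff_neg_one_pow_sub_one hts fun p hp => hs p (hts hp), div_eq_mul_inv (l ^ _),
    neg_two_pow]
  ring

lemma MsSub_eq_submatrix_hyperbolicMatrix (n N : ℕ) (ξ : ℕ → ℝ) (l : ℂ) (i : ℕ) :
    MsSub n N ξ l i =
      (hyperbolicMatrix (fun p => (-1) ^ (p - 1) * l) fun p => Complex.exp (n * ξ p)).submatrix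
        (fun a : Fin (N + 1 - i) => i + a) (fun a : Fin (N + 1 - i) => i + a) := by
  ext a b
  simp only [MsSub, hyperbolicMatrix, Matrix.submatrix_apply, Matrix.of_apply, add_right_inj,
    Fin.val_inj, add_lt_add_iff_left, Fin.val_fin_lt, ← Complex.exp_neg]
  split_ifs
  · rw [← Complex.exp_nat_mul]
    push_cast
    ring_nf
  · push_cast [Complex.sinh]
    ring
  · push_cast [Complex.cosh]
    ring

lemma det_MsSub_eq_principalMinor (n N : ℕ) (ξ : ℕ → ℝ) (l : ℂ) (i : ℕ) :
    (MsSub n N ξ l i).det =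
      principalMinor (hyperbolicMatrix (fun p => (-1) ^ (p - 1) * l)
        fun p => Complex.exp (n * ξ p)) (Icc i N) := by
  let f : Fin (N + 1 - i) ↪ ℕ := Fin.valEmbedding.trans (addLeftEmbedding i)
  have map_univ_eq_Icc : univ.map f = Icc i N := by
    ext p
    simp only [mem_map, mem_univ, true_and, mem_Icc]
    constructor
    · rintro ⟨a, rfl⟩
      have : f a = i + a := rfl
      lia
    · rintro ⟨hip, hpN⟩
      exact ⟨⟨p - i, by lia⟩, Nat.add_sub_cancel' hip⟩
  rw [MsSub_eq_submatrix_hyperbolicMatrix, ← map_univ_eq_Icc, principalMinor_map_univ]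
  rfl

lemma ofReal_sgnExpSum (n : ℕ) (ξ : ℕ → ℝ) (lo hi k : ℕ) :
    ((sgnExpSum n ξ lo hi k : ℝ) : ℂ) = ∑ t ∈ (Icc lo hi).powersetCard k,
      (-1) ^ (∑ p ∈ t, p) * alternatingProd (fun p => Complex.exp (n * ξ p)) t ^ 2 := by
  rw [sgnExpSum, Complex.ofReal_sum]
  refine sum_congr rfl fun t _ => ?_
  rw [alternatingProd_exp, ← Complex.exp_nat_mul]
  push_cast
  simp only [mul_sum]
  ring_nf

theorem det_MsSub_eq_general (N n : ℕ) (ξ : ℕ → ℝ) (i : ℕ) (hi1 : 1 ≤ i) (hiN : i ≤ N) (l : ℂ) :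
    (MsSub n N ξ l i).det =
      (if Odd N then (-1 : ℂ) ^ ((N + 1 - i) / 2)
        else (-1 : ℂ) ^ (i - 1) * (-1 : ℂ) ^ ((N + 1 - i) / 2)) *
        ∑ k ∈ Finset.range (N + 1 - i + 1),
          l ^ (N + 1 - i - k) / (-2) ^ k * ((sgnExpSum n ξ i N k : ℝ) : ℂ) := by
  have sum_by_card : ∑ k ∈ range (N + 1 - i + 1),
      l ^ (N + 1 - i - k) / (-2) ^ k * ((sgnExpSum n ξ i N k : ℝ) : ℂ) =
      ∑ t ∈ (Icc i N).powerset, l ^ (#(Icc i N) - #t) / (-2) ^ #t *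
        ((-1) ^ (∑ p ∈ t, p) * alternatingProd (fun p => Complex.exp (n * ξ p)) t ^ 2) := by
    rw [sum_powerset, Nat.card_Icc]
    refine sum_congr rfl fun k _ => ?_
    rw [ofReal_sgnExpSum, mul_sum]
    refine sum_congr rfl fun t ht => ?_
    rw [(mem_powersetCard.mp ht).2]
  rw [det_MsSub_eq_principalMinor,
    principalMinor_hyperbolicMatrix_alternating l _ fun p hp => hi1.trans (mem_Icc.mp hp).1,
    prod_Icc_neg_one_pow_sub_one hi1 hiN, sum_by_card]

/-- Explicit formula for the determinant of the trailing submatrix `M_{i:N,s}`. -/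
theorem det_MsSub_eq (N n : ℕ) (hN : 0 < N) (hn : 0 < n) (ξ : ℕ → ℝ)
    (hξ : ∀ i j, 1 ≤ i → i < j → j ≤ N → ξ j < ξ i) (hpos : 0 < ξ N)
    (i : ℕ) (hi1 : 1 ≤ i) (hiN : i ≤ N) (l : ℂ) :
    (MsSub n N ξ l i).det =
      (if Odd N then (-1 : ℂ) ^ ((N + 1 - i) / 2)
        else (-1 : ℂ) ^ (i - 1) * (-1 : ℂ) ^ ((N + 1 - i) / 2)) *
        ∑ k ∈ Finset.range (N + 1 - i + 1),
          l ^ (N + 1 - i - k) / (-2) ^ k * ((sgnExpSum n ξ i N k : ℝ) : ℂ) := by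
  exact det_MsSub_eq_general N n ξ i hi1 hiN l
end

section
/- Every complex eigenvalue of the N×N real matrix K_{N,s} (the transposed n-order odd NP matrix) is real and lies in the interval [−1/2, 1/2]; in particular K_{N,s} has N real eigenvalues, counted with multiplicity, all contained in [−1/2, 1/2]. -/
/-!
Write `x_k = n ξ_k` and let `g(t, y) = sinh (min t y) * exp (-max t y)` be the Green's function of
`1 - d²/dt²` on the half line with Dirichlet condition at `0`. For a vector `v` put
`u(t) = ∑_j g(t, x_j) v_j`: then `u'' = u` on the layers between consecutive points, and `u'` jumps
by `-v_k` when `t` increases through `x_k`. Up to the alternating sign, `(K v)_k` is the mean of the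
two one-sided derivatives of `u` at `x_k`, so an eigenvector for `μ` makes `σ u'` continuous, where
`σ = μ ± 1 / 2` is constant on each layer and the sign alternates. Integrating `(σ u')' = σ u`
against the conjugate of `u` layer by layer gives `∑_k σ_k E_k = 0` with `E_k = ∫ |u'|² + |u|²` over
the `k`-th layer. Hence `μ` is a mean of the points `± 1 / 2` with weights `E_k ≥ 0`, not all of
which vanish since `v ≠ 0`.
-/

open Finset Polynomial

/-- The transposed `n`-order odd NP matrix `K_{N,s}`: with 1-based indices
`p = a+1`, `q = b+1`, the `(p,p)` entry is `(−1)^{p−1} (1/2) e^{−2nξ_p}`, the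
`(p,q)` entry for `q > p` is `(−1)^p sinh(nξ_q) e^{−nξ_p}`, and for `q < p` it
is `(−1)^{p−1} cosh(nξ_p) e^{−nξ_q}`. -/
noncomputable def Ks (n N : ℕ) (ξ : ℕ → ℝ) : Matrix (Fin N) (Fin N) ℝ :=
  fun a b =>
    if a = b then
      (-1 : ℝ) ^ (a : ℕ) * (Real.exp (-(2 * n * ξ ((a : ℕ) + 1))) / 2)
    else if a < b then
      (-1 : ℝ) ^ ((a : ℕ) + 1) * (Real.sinh (n * ξ ((b : ℕ) + 1)) * Real.exp (-(n * ξ ((a : ℕ) + 1))))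
    else
      (-1 : ℝ) ^ (a : ℕ) * (Real.cosh (n * ξ ((a : ℕ) + 1)) * Real.exp (-(n * ξ ((b : ℕ) + 1))))

open scoped ComplexConjugate Matrix

lemma mem_of_sum_smul_sub_eq_zero {𝕜 E ι : Type*} [Field 𝕜] [LinearOrder 𝕜]
    [IsStrictOrderedRing 𝕜] [AddCommGroup E] [Module 𝕜 E] {s : Set E} (hs : Convex 𝕜 s)
    {t : Finset ι} {w : ι → 𝕜} {z : ι → E} {p : E} (hw : ∀ i ∈ t, 0 ≤ w i)
    (hpos : 0 < ∑ i ∈ t, w i) (hz : ∀ i ∈ t, z i ∈ s)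
    (hp : ∑ i ∈ t, w i • (p - z i) = 0) : p ∈ s := by
  have hmean : t.centerMass w z = p := by
    simp only [smul_sub, sum_sub_distrib, ← sum_smul, sub_eq_zero] at hp
    rw [centerMass, ← hp, inv_smul_smul₀ hpos.ne']
  exact hmean ▸ hs.centerMass_mem hw hpos hz

section ExpMode

/-- The general solution `a e^t + b e^{-t}` of `u'' = u`. Its derivative is `expMode a (-b)`. -/
noncomputable def expMode (a b : ℂ) (t : ℝ) : ℂ :=
  a * Real.exp t + b * Real.exp (-t)

/-- The flux `conj u * u'` of the mode `u = expMode a b`. -/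
noncomputable def expModeFlux (a b : ℂ) (t : ℝ) : ℂ :=
  conj (expMode a b t) * expMode a (-b) t

/-- The energy `∫ |u'|² + |u|²` of the mode `u = expMode a b` over the interval `(s, t)`, in closed
form. -/
noncomputable def expModeEnergy (a b : ℂ) (s t : ℝ) : ℝ :=
  Complex.normSq a * (Real.exp (2 * t) - Real.exp (2 * s)) +
    Complex.normSq b * (Real.exp (-(2 * s)) - Real.exp (-(2 * t)))

lemma expModeFlux_eq (a b : ℂ) (t : ℝ) :
    expModeFlux a b t = Complex.normSq a * Real.exp (2 * t) - Complex.normSq b * Real.exp (-(2 * t))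
      + (a * conj b - conj a * b) := by
  have hexp : (Real.exp t : ℂ) * Real.exp (-t) = 1 := by
    rw [← Complex.ofReal_mul, ← Real.exp_add, add_neg_cancel, Real.exp_zero, Complex.ofReal_one]
  rw [two_mul, neg_add, Real.exp_add, Real.exp_add]
  simp only [expModeFlux, expMode, map_add, map_mul, Complex.conj_ofReal, Complex.ofReal_mul,
    Complex.normSq_eq_conj_mul_self]
  linear_combination (a * conj b - conj a * b) * hexp

lemma expModeFlux_sub_expModeFlux (a b : ℂ) (s t : ℝ) :
    expModeFlux a b t - expModeFlux a b s = expModeEnergy a b s t := by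
  simp only [expModeFlux_eq, expModeEnergy]
  push_cast
  ring

variable {a b : ℂ} {s t : ℝ}

lemma expModeEnergy_nonneg (h : s ≤ t) : 0 ≤ expModeEnergy a b s t :=
  add_nonneg
    (mul_nonneg (Complex.normSq_nonneg a) (sub_nonneg.2 (Real.exp_le_exp.2 (by linarith))))
    (mul_nonneg (Complex.normSq_nonneg b) (sub_nonneg.2 (Real.exp_le_exp.2 (by linarith))))

lemma expModeEnergy_pos (h : s < t) (ha : a ≠ 0) : 0 < expModeEnergy a b s t :=
  add_pos_of_pos_of_nonneg
    (mul_pos (Complex.normSq_pos.2 ha) (sub_pos.2 (Real.exp_lt_exp.2 (by linarith))))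
    (mul_nonneg (Complex.normSq_nonneg b) (sub_nonneg.2 (Real.exp_le_exp.2 (by linarith))))

end ExpMode

section Layers

variable (N : ℕ) (x : ℕ → ℝ) (v : ℕ → ℂ)

/-- The coefficient of `e^t` in `layerPotential`, which the charges above layer `k` produce through
`sinh t * exp (-x j)`. -/
noncomputable def growthCoeff (k : ℕ) : ℂ :=
  (∑ j ∈ range k, Real.exp (-x j) * v j) / 2

/-- The coefficient of `e^{-t}` in `layerPotential`: the charges below layer `k` contribute through
`sinh (x j) * exp (-t)`, those above it through the decaying half of `sinh t`. -/
noncomputable def decayCoeff (k : ℕ) : ℂ :=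
  ∑ j ∈ Ico k N, Real.sinh (x j) * v j - growthCoeff x v k

/-- The potential `∑_{j < N} g(t, x_j) v_j` of charges `v_j` at points `x_0 > x_1 > ⋯`, where
`g(t, y) = sinh (min t y) * exp (-max t y)`, on layer `k`: the interval from `x_k` up to `x_{k-1}`,
or to `∞` when `k = 0`. Each layer carries its own formula, so that at the point `x_k` the formulas
of layers `k` and `k + 1` give the two one-sided limits. -/
noncomputable def layerPotential (k : ℕ) : ℝ → ℂ :=
  expMode (growthCoeff x v k) (decayCoeff N x v k)

/-- The derivative of `layerPotential`. -/
noncomputable def layerPotentialDeriv (k : ℕ) : ℝ → ℂ :=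
  expMode (growthCoeff x v k) (-decayCoeff N x v k)

/-- The mean of the two one-sided derivatives of the layer potential at `x k`. -/
noncomputable def layerPotentialMeanDeriv (k : ℕ) : ℂ :=
  (layerPotentialDeriv N x v k (x k) + layerPotentialDeriv N x v (k + 1) (x k)) / 2

/-- The flux `conj u * u'` of the layer potential `u`. -/
noncomputable def layerFlux (k : ℕ) (t : ℝ) : ℂ :=
  conj (layerPotential N x v k t) * layerPotentialDeriv N x v k t

/-- The energy `∫ |u'|² + |u|²` of the layer potential `u` over layer `k`. Layer `0` is the
unbounded interval above `x 0`, where `u` is a multiple of `e^{-t}`. -/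
noncomputable def layerEnergy : ℕ → ℝ
  | 0 => Complex.normSq (decayCoeff N x v 0) * Real.exp (-(2 * x 0))
  | k + 1 => expModeEnergy (growthCoeff x v (k + 1)) (decayCoeff N x v (k + 1)) (x (k + 1)) (x k)

lemma growthCoeff_zero : growthCoeff x v 0 = 0 := by
  simp [growthCoeff]

lemma growthCoeff_succ (k : ℕ) :
    growthCoeff x v (k + 1) = growthCoeff x v k + Real.exp (-x k) * v k / 2 := by
  rw [growthCoeff, sum_range_succ, add_div, growthCoeff]

lemma layerPotential_apply (k : ℕ) (t : ℝ) :
    layerPotential N x v k t = Real.sinh t * ∑ j ∈ range k, Real.exp (-x j) * v j +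
      Real.exp (-t) * ∑ j ∈ Ico k N, Real.sinh (x j) * v j := by
  rw [layerPotential, expMode, decayCoeff, growthCoeff, Real.sinh_eq t]
  push_cast
  ring

lemma layerPotentialDeriv_apply (k : ℕ) (t : ℝ) :
    layerPotentialDeriv N x v k t = Real.cosh t * ∑ j ∈ range k, Real.exp (-x j) * v j -
      Real.exp (-t) * ∑ j ∈ Ico k N, Real.sinh (x j) * v j := by
  rw [layerPotentialDeriv, expMode, decayCoeff, growthCoeff, Real.cosh_eq t]
  push_cast
  ring

lemma layerFlux_eq_expModeFlux (k : ℕ) :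
    layerFlux N x v k = expModeFlux (growthCoeff x v k) (decayCoeff N x v k) :=
  rfl

lemma layerFlux_zero (t : ℝ) :
    layerFlux N x v 0 t = -(Complex.normSq (decayCoeff N x v 0) * Real.exp (-(2 * t)) : ℝ) := by
  simp [layerFlux_eq_expModeFlux, expModeFlux_eq, growthCoeff_zero]

lemma layerPotential_self_zero : layerPotential N x v N 0 = 0 := by
  simp [layerPotential_apply]

lemma layerFlux_self_zero : layerFlux N x v N 0 = 0 := by
  rw [layerFlux, layerPotential_self_zero, map_zero, zero_mul]

variable {N x v} {k : ℕ}

lemma layerPotential_succ_apply_self (hk : k < N) :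
    layerPotential N x v (k + 1) (x k) = layerPotential N x v k (x k) := by
  rw [layerPotential_apply, layerPotential_apply, sum_range_succ, sum_eq_sum_Ico_succ_bot hk]
  ring

lemma layerPotentialDeriv_succ_sub_apply_self (hk : k < N) :
    layerPotentialDeriv N x v (k + 1) (x k) - layerPotentialDeriv N x v k (x k) = v k := by
  have hexp : ((Real.cosh (x k) + Real.sinh (x k)) * Real.exp (-x k) : ℂ) = 1 := by
    rw [← Complex.ofReal_add, Real.cosh_add_sinh, ← Complex.ofReal_mul, ← Real.exp_add,
      add_neg_cancel, Real.exp_zero, Complex.ofReal_one]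
  rw [layerPotentialDeriv_apply, layerPotentialDeriv_apply, sum_range_succ,
    sum_eq_sum_Ico_succ_bot hk]
  linear_combination v k * hexp

lemma layerPotentialMeanDeriv_eq (hk : k < N) :
    layerPotentialMeanDeriv N x v k =
      Real.cosh (x k) * ∑ j ∈ range k, Real.exp (-x j) * v j + Real.exp (-(2 * x k)) / 2 * v k -
        Real.exp (-x k) * ∑ j ∈ Ico (k + 1) N, Real.sinh (x j) * v j := by
  have hexp : ((Real.cosh (x k) - Real.sinh (x k)) * Real.exp (-x k) : ℂ) =
      Real.exp (-(2 * x k)) := by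
    rw [← Complex.ofReal_sub, Real.cosh_sub_sinh, ← Complex.ofReal_mul, ← Real.exp_add]
    ring_nf
  rw [layerPotentialMeanDeriv, layerPotentialDeriv_apply, layerPotentialDeriv_apply,
    sum_range_succ, sum_eq_sum_Ico_succ_bot hk]
  linear_combination v k / 2 * hexp

lemma layerEnergy_nonneg (hx : ∀ k < N, x (k + 1) ≤ x k) (hk : k ≤ N) :
    0 ≤ layerEnergy N x v k := by
  cases k with
  | zero => exact mul_nonneg (Complex.normSq_nonneg _) (Real.exp_pos _).le
  | succ k => exact expModeEnergy_nonneg (hx k hk)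

lemma layerEnergy_pos (hx : ∀ k < N, x (k + 1) < x k) (hk : k ≤ N) (h : growthCoeff x v k ≠ 0) :
    0 < layerEnergy N x v k := by
  cases k with
  | zero => exact absurd (growthCoeff_zero x v) h
  | succ k => exact expModeEnergy_pos (hx k hk) h

lemma exists_growthCoeff_ne_zero (hv : ∃ k < N, v k ≠ 0) : ∃ k ≤ N, growthCoeff x v k ≠ 0 := by
  obtain ⟨k, hk, hvk⟩ := hv
  by_contra! h
  have hsucc := growthCoeff_succ x v k
  rw [h k hk.le, h (k + 1) hk, zero_add] at hsucc
  have hexp : (Real.exp (-x k) : ℂ) ≠ 0 := Complex.ofReal_ne_zero.2 (Real.exp_ne_zero _)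
  exact div_ne_zero (mul_ne_zero hexp hvk) two_ne_zero hsucc.symm

lemma sum_layerEnergy_pos (hx : ∀ k < N, x (k + 1) < x k) (hv : ∃ k < N, v k ≠ 0) :
    0 < ∑ k ∈ range (N + 1), layerEnergy N x v k := by
  obtain ⟨k, hk, hgrowth⟩ := exists_growthCoeff_ne_zero (x := x) hv
  exact sum_pos'
    (fun j hj => layerEnergy_nonneg (fun i hi => (hx i hi).le) (mem_range_succ_iff.1 hj))
    ⟨k, mem_range_succ_iff.2 hk, layerEnergy_pos hx hk hgrowth⟩

variable {μ : ℂ}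

lemma layerPotentialDeriv_transmission (hk : k < N)
    (hμ : (-1) ^ k * layerPotentialMeanDeriv N x v k = μ * v k) :
    (μ - (-1) ^ k / 2) * layerPotentialDeriv N x v (k + 1) (x k) =
      (μ - (-1) ^ (k + 1) / 2) * layerPotentialDeriv N x v k (x k) := by
  rw [layerPotentialMeanDeriv] at hμ
  rw [pow_succ]
  linear_combination μ * layerPotentialDeriv_succ_sub_apply_self hk - hμ

lemma layerFlux_transmission (hk : k < N)
    (hμ : (-1) ^ k * layerPotentialMeanDeriv N x v k = μ * v k) :
    (μ - (-1) ^ k / 2) * layerFlux N x v (k + 1) (x k) =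
      (μ - (-1) ^ (k + 1) / 2) * layerFlux N x v k (x k) := by
  rw [layerFlux, layerFlux, layerPotential_succ_apply_self hk]
  linear_combination conj (layerPotential N x v k (x k)) * layerPotentialDeriv_transmission hk hμ

lemma sum_layerEnergy_smul_eq_neg_layerFlux
    (hμ : ∀ k < N, (-1) ^ k * layerPotentialMeanDeriv N x v k = μ * v k) (hk : k ≤ N) :
    ∑ j ∈ range (k + 1), layerEnergy N x v j • (μ - (-1) ^ (j + 1) / 2) =
      -((μ - (-1) ^ (k + 1) / 2) * layerFlux N x v k (x k)) := by
  induction k with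
  | zero =>
    rw [sum_range_one, layerFlux_zero, layerEnergy, Complex.real_smul]
    ring
  | succ k ih =>
    have henergy : (layerEnergy N x v (k + 1) : ℂ) =
        layerFlux N x v (k + 1) (x k) - layerFlux N x v (k + 1) (x (k + 1)) := by
      rw [layerFlux_eq_expModeFlux, expModeFlux_sub_expModeFlux, layerEnergy]
    rw [sum_range_succ, ih (Nat.le_of_succ_le hk), Complex.real_smul, henergy]
    linear_combination layerFlux_transmission hk (hμ k hk)

theorem mem_ofReal_image_Icc_of_layerPotentialMeanDeriv (hx : ∀ k < N, x (k + 1) < x k)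
    (hxN : x N = 0) (hv : ∃ k < N, v k ≠ 0)
    (hμ : ∀ k < N, (-1) ^ k * layerPotentialMeanDeriv N x v k = μ * v k) :
    μ ∈ Complex.ofReal '' Set.Icc (-(1 / 2)) (1 / 2) := by
  have hconvex : Convex ℝ (Complex.ofReal '' Set.Icc (-(1 / 2)) (1 / 2)) :=
    (convex_Icc _ _).linear_image Complex.ofRealCLM.toLinearMap
  refine mem_of_sum_smul_sub_eq_zero hconvex (z := fun k => (-1) ^ (k + 1) / 2)
    (fun k hk => layerEnergy_nonneg (fun j hj => (hx j hj).le) (mem_range_succ_iff.1 hk))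
    (sum_layerEnergy_pos hx hv)
    (fun k _ => ⟨(-1) ^ (k + 1) / 2, ?_, by push_cast; rfl⟩) ?_
  · rcases neg_one_pow_eq_or ℝ (k + 1) with h | h <;> rw [h] <;> norm_num
  · rw [sum_layerEnergy_smul_eq_neg_layerFlux hμ le_rfl, hxN, layerFlux_self_zero, mul_zero,
      neg_zero]

end Layers

section Matrix

variable {n N k : ℕ} {ξ : ℕ → ℝ}

/-- The points `n ξ_1 > ⋯ > n ξ_N`, indexed from `0` and completed by the boundary point `0` of the
half line at index `N`. -/
noncomputable def layerPoint (n N : ℕ) (ξ : ℕ → ℝ) (k : ℕ) : ℝ :=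
  if k < N then n * ξ (k + 1) else 0

lemma layerPoint_of_lt (hk : k < N) : layerPoint n N ξ k = n * ξ (k + 1) :=
  if_pos hk

lemma layerPoint_self : layerPoint n N ξ N = 0 :=
  if_neg (lt_irrefl N)

lemma layerPoint_succ_lt (hn : 0 < n) (hξ : ∀ i j, 1 ≤ i → i < j → j ≤ N → ξ j < ξ i)
    (hpos : 0 < ξ N) (hk : k < N) : layerPoint n N ξ (k + 1) < layerPoint n N ξ k := by
  have hn' : (0 : ℝ) < n := Nat.cast_pos.2 hn
  rw [layerPoint_of_lt hk]
  rcases Nat.lt_or_eq_of_le (Nat.succ_le_of_lt hk) with hlt | rfl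
  · rw [layerPoint_of_lt hlt]
    exact mul_lt_mul_of_pos_left (hξ _ _ k.succ_pos (Nat.lt_succ_self _) hlt) hn'
  · rw [layerPoint_self]
    exact mul_pos hn' hpos

lemma Ks_apply_of_gt {i j : Fin N} (h : j < i) :
    Ks n N ξ i j = (-1) ^ (i : ℕ) *
      (Real.cosh (layerPoint n N ξ i) * Real.exp (-layerPoint n N ξ j)) := by
  rw [Ks, if_neg h.ne', if_neg h.not_gt, layerPoint_of_lt i.2, layerPoint_of_lt j.2]

lemma Ks_apply_self (i : Fin N) :
    Ks n N ξ i i = (-1) ^ (i : ℕ) * (Real.exp (-(2 * layerPoint n N ξ i)) / 2) := by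
  rw [Ks, if_pos rfl, layerPoint_of_lt i.2, mul_assoc]

lemma Ks_apply_of_lt {i j : Fin N} (h : i < j) :
    Ks n N ξ i j = -((-1) ^ (i : ℕ) *
      (Real.exp (-layerPoint n N ξ i) * Real.sinh (layerPoint n N ξ j))) := by
  rw [Ks, if_neg h.ne, if_pos h, layerPoint_of_lt i.2, layerPoint_of_lt j.2]
  ring

lemma Ks_map_mulVec_apply (v : ℕ → ℂ) (hk : k < N) :
    ((Ks n N ξ).map Complex.ofReal *ᵥ fun j => v j) ⟨k, hk⟩ =
      (-1) ^ k * layerPotentialMeanDeriv N (layerPoint n N ξ) v k := by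
  rw [layerPotentialMeanDeriv_eq hk, Matrix.mulVec, dotProduct, sum_fin_eq_sum_range,
    ← sum_range_add_sum_Ico _ hk.le, sum_eq_sum_Ico_succ_bot hk, dif_pos hk, mul_sub, mul_add,
    mul_sum, mul_sum, mul_sum, mul_sum, sub_eq_add_neg, ← sum_neg_distrib, add_assoc]
  congr 1
  · refine sum_congr rfl fun j hj => ?_
    have hjk : j < k := mem_range.1 hj
    rw [dif_pos (hjk.trans hk), Matrix.map_apply, Ks_apply_of_gt (Fin.mk_lt_mk.2 hjk)]
    push_cast
    ring
  congr 1
  · rw [Matrix.map_apply, Ks_apply_self]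
    push_cast
    ring
  · refine sum_congr rfl fun j hj => ?_
    obtain ⟨hkj, hjN⟩ := mem_Ico.1 hj
    rw [dif_pos hjN, Matrix.map_apply, Ks_apply_of_lt (Fin.mk_lt_mk.2 hkj)]
    push_cast
    ring

lemma exists_mulVec_eq_smul_of_isRoot_charpoly {ι R : Type*} [Fintype ι] [DecidableEq ι]
    [CommRing R] [IsDomain R] {A : Matrix ι ι R} {μ : R} (hμ : A.charpoly.IsRoot μ) :
    ∃ v ≠ 0, A *ᵥ v = μ • v := by
  rw [← Matrix.charpoly_toLin', ← Module.End.hasEigenvalue_iff_isRoot_charpoly] at hμ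
  obtain ⟨v, hv⟩ := hμ.exists_hasEigenvector
  exact ⟨v, hv.2, by simpa using hv.apply_eq_smul⟩

theorem mem_ofReal_image_Icc_of_isRoot_charpoly_Ks (hn : 0 < n)
    (hξ : ∀ i j, 1 ≤ i → i < j → j ≤ N → ξ j < ξ i) (hpos : 0 < ξ N) {μ : ℂ}
    (hμ : ((Ks n N ξ).map Complex.ofReal).charpoly.IsRoot μ) :
    μ ∈ Complex.ofReal '' Set.Icc (-(1 / 2)) (1 / 2) := by
  obtain ⟨v, hv, hKv⟩ := exists_mulVec_eq_smul_of_isRoot_charpoly hμ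
  obtain ⟨w, rfl⟩ : ∃ w : ℕ → ℂ, v = fun j : Fin N => w j :=
    ⟨Function.extend Fin.val v 0, funext fun j => (Fin.val_injective.extend_apply v 0 j).symm⟩
  obtain ⟨j, hj⟩ := Function.ne_iff.1 hv
  refine mem_ofReal_image_Icc_of_layerPotentialMeanDeriv
    (fun k hk => layerPoint_succ_lt hn hξ hpos hk) layerPoint_self ⟨j, j.2, hj⟩ fun k hk => ?_
  rw [← Ks_map_mulVec_apply w hk, hKv, Pi.smul_apply, smul_eq_mul]

end Matrix

/-- Every complex eigenvalue of `K_{N,s}` (i.e. every root of its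
characteristic polynomial over `ℂ`) is real and lies in `[−1/2, 1/2]`;
in particular `K_{N,s}` has exactly `N` eigenvalues counted with multiplicity,
all real and contained in `[−1/2, 1/2]`. -/
theorem eigenvalues_Ks_real_mem_Icc (N n : ℕ) (hN : 0 < N) (hn : 0 < n) (ξ : ℕ → ℝ)
    (hξ : ∀ i j, 1 ≤ i → i < j → j ≤ N → ξ j < ξ i) (hpos : 0 < ξ N) :
    (∀ μ : ℂ, ((Ks n N ξ).map (Complex.ofReal)).charpoly.IsRoot μ →
        μ.im = 0 ∧ -(1 / 2) ≤ μ.re ∧ μ.re ≤ 1 / 2) ∧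
      Multiset.card ((Ks n N ξ).map (Complex.ofReal)).charpoly.roots = N := by
  refine ⟨fun μ hμ => ?_, ?_⟩
  · obtain ⟨r, hr, rfl⟩ := mem_ofReal_image_Icc_of_isRoot_charpoly_Ks hn hξ hpos hμ
    exact ⟨Complex.ofReal_im r, hr⟩
  · rw [IsAlgClosed.card_roots_eq_natDegree, Matrix.charpoly_natDegree_eq_dim, Fintype.card_fin]
end
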